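/- arXiv:1305.6765 — 2 statements merged into one kernel-verified Lean document; each statement's English description precedes it below -/
import Mathlib

section
/- Let b, c, p, q₀, ρ be real numbers, set b̃ = b + ρcp, and let χ > 0 satisfy χ² = c²p(p − 1) − b̃². If y, z, q : ℝ → ℝ are differentiable and satisfy, for all t, the correlated Stein–Stein Hamiltonian system y'(t) = z(t)²(p − 1/2) + ρc·z(t)·q(t), z'(t) = b̃·z(t) + c²·q(t), q'(t) = p·z(t)(1 − p) − b̃·q(t), with y(0) = z(0) = 0 and q(0) = q₀, then for all t: z(t) = (q₀c²/χ)·sin(χt), q(t) = q₀·(cos(χt) − (b̃/χ)·sin(χt)), and y(t) = (q₀²c²/(8χ³))·[(c²(2p − 1) − 2ρc·b̃)·(2χt − sin(2χt)) + 2ρc·χ·(1 − cos(2χt))]. Conversely, the functions defined by these formulas satisfy the system with these initial conditions. -/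
lemma const_aux (f : ℝ → ℝ) (h : ∀ t, HasDerivAt f 0 t) (t : ℝ) : f t = f 0 :=
  is_const_of_deriv_eq_zero (fun x => (h x).differentiableAt) (fun x => (h x).deriv) t 0

lemma lin_unique (β c κ χ : ℝ) (hχ : 0 < χ) (h2 : χ ^ 2 = c ^ 2 * κ - β ^ 2) (u v : ℝ → ℝ)
    (hu : ∀ t, HasDerivAt u (β * u t + c ^ 2 * v t) t)
    (hv : ∀ t, HasDerivAt v (-κ * u t - β * v t) t)
    (hu0 : u 0 = 0) (hv0 : v 0 = 0) (t : ℝ) : u t = 0 ∧ v t = 0 := by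
  have hc : c ≠ 0 := by
    rintro rfl
    nlinarith [sq_nonneg β, pow_pos hχ 2]
  have hE := const_aux (fun t => κ * (u t * u t) + 2 * β * (u t * v t) + c ^ 2 * (v t * v t))
    (fun t => by
      have := ((((hu t).mul (hu t)).const_mul κ).add (((hu t).mul (hv t)).const_mul (2 * β))).add
        (((hv t).mul (hv t)).const_mul (c ^ 2))
      refine this.congr_deriv ?_
      ring) t
  simp only [hu0, hv0] at hE
  have h3 : (c ^ 2 * v t + β * u t) ^ 2 + (χ * u t) ^ 2 = 0 := by
    rw [mul_pow χ, h2]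
    linear_combination c ^ 2 * hE
  have h4 : χ * u t = 0 := by
    apply pow_eq_zero_iff (two_ne_zero) |>.1
    nlinarith [sq_nonneg (c ^ 2 * v t + β * u t), sq_nonneg (χ * u t)]
  have h5 : u t = 0 := (mul_eq_zero.1 h4).resolve_left hχ.ne'
  refine ⟨h5, ?_⟩
  rw [h5] at h3
  have h6 : (c ^ 2 * v t) ^ 2 = 0 := by linear_combination h3
  have h7 : c ^ 2 * v t = 0 := pow_eq_zero_iff (two_ne_zero) |>.1 h6
  exact (mul_eq_zero.1 h7).resolve_left (pow_ne_zero 2 hc)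

/-- Explicit solution of the correlated Stein–Stein Hamiltonian flow (with
`b̃ = b + ρcp`) started at `(y,z,q)(0) = (0,0,q₀)`, together with the converse
statement that the explicit formulas indeed solve the system. -/
theorem stein_stein_correlated_hamiltonian_flow
    (b c p q₀ ρ : ℝ) (χ : ℝ) (hχ : 0 < χ)
    (hχ2 : χ ^ 2 = c ^ 2 * p * (p - 1) - (b + ρ * c * p) ^ 2) :
    ((∀ y z q : ℝ → ℝ,
      (∀ t : ℝ, HasDerivAt y (z t ^ 2 * (p - 1 / 2) + ρ * c * z t * q t) t) →
      (∀ t : ℝ, HasDerivAt z ((b + ρ * c * p) * z t + c ^ 2 * q t) t) →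
      (∀ t : ℝ, HasDerivAt q (p * z t * (1 - p) - (b + ρ * c * p) * q t) t) →
      y 0 = 0 → z 0 = 0 → q 0 = q₀ →
      ∀ t : ℝ,
        z t = q₀ * c ^ 2 / χ * Real.sin (χ * t) ∧
        q t = q₀ * (Real.cos (χ * t) - (b + ρ * c * p) / χ * Real.sin (χ * t)) ∧
        y t = q₀ ^ 2 * c ^ 2 / (8 * χ ^ 3) *
          ((c ^ 2 * (2 * p - 1) - 2 * ρ * c * (b + ρ * c * p)) * (2 * χ * t - Real.sin (2 * χ * t))
            + 2 * ρ * c * χ * (1 - Real.cos (2 * χ * t)))))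
    ∧
    ((∀ t : ℝ,
      HasDerivAt (fun s : ℝ => q₀ ^ 2 * c ^ 2 / (8 * χ ^ 3) *
          ((c ^ 2 * (2 * p - 1) - 2 * ρ * c * (b + ρ * c * p)) * (2 * χ * s - Real.sin (2 * χ * s))
            + 2 * ρ * c * χ * (1 - Real.cos (2 * χ * s))))
        ((q₀ * c ^ 2 / χ * Real.sin (χ * t)) ^ 2 * (p - 1 / 2)
          + ρ * c * (q₀ * c ^ 2 / χ * Real.sin (χ * t))
            * (q₀ * (Real.cos (χ * t) - (b + ρ * c * p) / χ * Real.sin (χ * t)))) t ∧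
      HasDerivAt (fun s : ℝ => q₀ * c ^ 2 / χ * Real.sin (χ * s))
        ((b + ρ * c * p) * (q₀ * c ^ 2 / χ * Real.sin (χ * t))
          + c ^ 2 * (q₀ * (Real.cos (χ * t) - (b + ρ * c * p) / χ * Real.sin (χ * t)))) t ∧
      HasDerivAt (fun s : ℝ =>
          q₀ * (Real.cos (χ * s) - (b + ρ * c * p) / χ * Real.sin (χ * s)))
        (p * (q₀ * c ^ 2 / χ * Real.sin (χ * t)) * (1 - p)
          - (b + ρ * c * p) * (q₀ * (Real.cos (χ * t) - (b + ρ * c * p) / χ * Real.sin (χ * t)))) t)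
    ∧ q₀ ^ 2 * c ^ 2 / (8 * χ ^ 3) *
        ((c ^ 2 * (2 * p - 1) - 2 * ρ * c * (b + ρ * c * p)) * (2 * χ * 0 - Real.sin (2 * χ * 0))
          + 2 * ρ * c * χ * (1 - Real.cos (2 * χ * 0))) = 0
    ∧ q₀ * c ^ 2 / χ * Real.sin (χ * 0) = 0
    ∧ q₀ * (Real.cos (χ * 0) - (b + ρ * c * p) / χ * Real.sin (χ * 0)) = q₀) := by
  have hχ0 : χ ≠ 0 := hχ.ne'
  have hs : ∀ t : ℝ, HasDerivAt (fun s : ℝ => Real.sin (χ * s)) (Real.cos (χ * t) * χ) t := by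
    intro t
    simpa using ((hasDerivAt_id t).const_mul χ).sin
  have hco : ∀ t : ℝ, HasDerivAt (fun s : ℝ => Real.cos (χ * s)) (-Real.sin (χ * t) * χ) t := by
    intro t
    simpa using ((hasDerivAt_id t).const_mul χ).cos
  have hl : ∀ t : ℝ, HasDerivAt (fun s : ℝ => 2 * χ * s) (2 * χ) t := by
    intro t
    simpa using ((hasDerivAt_id t).const_mul (2 * χ))
  have hY : ∀ t : ℝ, HasDerivAt (fun s : ℝ => q₀ ^ 2 * c ^ 2 / (8 * χ ^ 3) *
          ((c ^ 2 * (2 * p - 1) - 2 * ρ * c * (b + ρ * c * p)) * (2 * χ * s - Real.sin (2 * χ * s))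
            + 2 * ρ * c * χ * (1 - Real.cos (2 * χ * s))))
        ((q₀ * c ^ 2 / χ * Real.sin (χ * t)) ^ 2 * (p - 1 / 2)
          + ρ * c * (q₀ * c ^ 2 / χ * Real.sin (χ * t))
            * (q₀ * (Real.cos (χ * t) - (b + ρ * c * p) / χ * Real.sin (χ * t)))) t := by
    intro t
    have := (((((hl t).sub (hl t).sin).const_mul
      (c ^ 2 * (2 * p - 1) - 2 * ρ * c * (b + ρ * c * p))).add
      (((hl t).cos.const_sub 1).const_mul (2 * ρ * c * χ))).const_mul
      (q₀ ^ 2 * c ^ 2 / (8 * χ ^ 3)))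
    refine this.congr_deriv ?_
    rw [show 2 * χ * t = 2 * (χ * t) by ring, Real.cos_two_mul, Real.sin_two_mul, Real.cos_sq']
    field_simp
    ring
  have hZ : ∀ t : ℝ, HasDerivAt (fun s : ℝ => q₀ * c ^ 2 / χ * Real.sin (χ * s))
        ((b + ρ * c * p) * (q₀ * c ^ 2 / χ * Real.sin (χ * t))
          + c ^ 2 * (q₀ * (Real.cos (χ * t) - (b + ρ * c * p) / χ * Real.sin (χ * t)))) t := by
    intro t
    refine ((hs t).const_mul (q₀ * c ^ 2 / χ)).congr_deriv ?_
    field_simp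
    ring
  have hQ : ∀ t : ℝ, HasDerivAt (fun s : ℝ =>
          q₀ * (Real.cos (χ * s) - (b + ρ * c * p) / χ * Real.sin (χ * s)))
        (p * (q₀ * c ^ 2 / χ * Real.sin (χ * t)) * (1 - p)
          - (b + ρ * c * p) * (q₀ * (Real.cos (χ * t)
            - (b + ρ * c * p) / χ * Real.sin (χ * t)))) t := by
    intro t
    refine (((hco t).sub ((hs t).const_mul ((b + ρ * c * p) / χ))).const_mul q₀).congr_deriv ?_
    field_simp
    linear_combination (-q₀ * Real.sin (χ * t)) * hχ2
  refine ⟨?_, fun t => ⟨hY t, hZ t, hQ t⟩, by simp, by simp, by simp⟩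
  intro y z q hy hz hq hy0 hz0 hq0
  have key := lin_unique (b + ρ * c * p) c (p * (p - 1)) χ hχ (by rw [hχ2]; ring)
    (fun t => z t - q₀ * c ^ 2 / χ * Real.sin (χ * t))
    (fun t => q t - q₀ * (Real.cos (χ * t) - (b + ρ * c * p) / χ * Real.sin (χ * t)))
    (fun t => ((hz t).sub (hZ t)).congr_deriv (by ring))
    (fun t => ((hq t).sub (hQ t)).congr_deriv (by ring))
    (by simp [hz0]) (by simp [hq0])
  have kz : ∀ t, z t = q₀ * c ^ 2 / χ * Real.sin (χ * t) := fun t => sub_eq_zero.1 (key t).1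
  have kq : ∀ t, q t = q₀ * (Real.cos (χ * t) - (b + ρ * c * p) / χ * Real.sin (χ * t)) :=
    fun t => sub_eq_zero.1 (key t).2
  intro t
  refine ⟨kz t, kq t, ?_⟩
  have h := const_aux _ (fun t => ((hy t).sub (hY t)).congr_deriv
    (by rw [kz t, kq t]; ring)) t
  simp only [Pi.sub_apply, hy0] at h
  simp only [mul_zero, Real.sin_zero, Real.cos_zero, sub_self, add_zero] at h
  exact sub_eq_zero.1 h
end

section
/- Let T > 0, b ≤ 0, c > 0 and a > 0. Let r₁ be the smallest strictly positive solution of r·cos r = bT·sin r, set p₁⁺ = (1/2)·(1 + √(1 + 4b²/c² + 4r₁²/(c²T²))), χ = r₁/T, and q₀ = (2/c²)·√(2r₁³a / ((2p₁⁺ − 1)T³(2r₁ − sin(2r₁)))). Then the infimum p₁⁺·a of the control energy (1/2)·∫₀ᵀ |ḣ(t)|² dt, over continuously differentiable controls h : [0,T] → ℝ² with h(0) = 0 steering the controlled system y' = −z²/2 + z·ḣ¹, z' = bz + c·ḣ², y(0) = z(0) = 0, to y(T) = a, is attained exactly at the two controls h₀⁺ and h₀⁻ with derivatives ḣ₀^{±,1}(t)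 = ± p₁⁺·(q₀c²/χ)·sin(χt) and ḣ₀^{±,2}(t) = ± c·q₀·(cos(χt) − (b/χ)·sin(χt)). -/
lemma ss_dsin (χ t : ℝ) :
    HasDerivAt (fun t => Real.sin (χ * t)) (Real.cos (χ * t) * χ) t := by
  simpa using ((hasDerivAt_id t).const_mul χ).sin

lemma ss_dcos (χ t : ℝ) :
    HasDerivAt (fun t => Real.cos (χ * t)) (-Real.sin (χ * t) * χ) t := by
  simpa using ((hasDerivAt_id t).const_mul χ).cos

open Set Filter Topology in
lemma ss_r_lt_pi (T b r₁ : ℝ) (hT : 0 < T) (hb : b ≤ 0)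
    (hmin : ∀ r : ℝ, 0 < r → r * Real.cos r = b * T * Real.sin r → r₁ ≤ r) : r₁ < Real.pi := by
  have hpi := Real.pi_pos
  have hcont : ContinuousOn (fun r : ℝ => r * Real.cos r - b * T * Real.sin r)
      (Icc (Real.pi / 2) Real.pi) := by fun_prop
  have h := intermediate_value_Icc' (by linarith : Real.pi / 2 ≤ Real.pi) hcont
  have h0 : (0 : ℝ) ∈ Icc (Real.pi * Real.cos Real.pi - b * T * Real.sin Real.pi)
      (Real.pi / 2 * Real.cos (Real.pi / 2) - b * T * Real.sin (Real.pi / 2)) := by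
    simp only [Real.cos_pi, Real.sin_pi, Real.cos_pi_div_two, Real.sin_pi_div_two]
    constructor
    · linarith
    · nlinarith
  obtain ⟨r, hr, hr0⟩ := h h0
  simp only at hr0
  have hle := hmin r (by linarith [hr.1]) (by linarith)
  rcases hr.2.lt_or_eq with h1 | h1
  · linarith
  · rw [h1, Real.cos_pi, Real.sin_pi] at hr0
    linarith

open Set Filter Topology in
lemma ss_tendsto (χ T z0 : ℝ) (hT : 0 < T) (hχ : 0 < χ) (z : ℝ → ℝ) (hz0 : z 0 = 0)
    (hz : HasDerivWithinAt z z0 (Icc 0 T) 0) :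
    ContinuousWithinAt (fun t => Real.cos (χ * t) / Real.sin (χ * t) * z t ^ 2) (Icc 0 T) 0 := by
  have h1 := (hasDerivWithinAt_iff_tendsto_slope.1 hz)
  have h2 : HasDerivWithinAt (fun t => Real.sin (χ * t)) χ (Icc 0 T) 0 := by
    have := ((hasDerivAt_id (0:ℝ)).const_mul χ).sin
    simpa using this.hasDerivWithinAt
  have h2' := (hasDerivWithinAt_iff_tendsto_slope.1 h2)
  have h3 : Tendsto z (𝓝[Icc 0 T \ {0}] 0) (𝓝 0) := by
    have := hz.continuousWithinAt.mono (sdiff_subset : Icc 0 T \ {0} ⊆ Icc 0 T)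
    simpa [ContinuousWithinAt, hz0] using this
  have h4 : Tendsto (fun t => Real.cos (χ * t)) (𝓝[Icc 0 T \ {0}] 0) (𝓝 1) := by
    have : Continuous (fun t : ℝ => Real.cos (χ * t)) := by fun_prop
    have := (this.tendsto 0).mono_left (nhdsWithin_le_nhds (s := Icc 0 T \ {0}))
    simpa using this
  have h5 := ((h4.mul h3).mul (h1.div h2' hχ.ne'))
  rw [← continuousWithinAt_sdiff_self]
  have e : (Real.cos (χ * 0) / Real.sin (χ * 0) * z 0 ^ 2) = 1 * 0 * (z0 / χ) := by simp
  unfold ContinuousWithinAt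
  beta_reduce
  rw [e]
  refine h5.congr' ?_
  filter_upwards [self_mem_nhdsWithin] with t ht
  have ht0 : t ≠ 0 := ht.2
  simp only [slope_def_field, hz0, mul_zero, Real.sin_zero, sub_zero, Pi.div_apply]
  rw [div_div_div_cancel_right₀ ht0]
  ring

open Set Filter Topology MeasureTheory in
lemma ss_core (T b c p χ a : ℝ) (hT : 0 < T) (hc : 0 < c) (hχ : 0 < χ) (hχT : χ * T < Real.pi)
    (hroot : χ * Real.cos (χ * T) = b * Real.sin (χ * T))
    (hp : (p ^ 2 - p) * c ^ 2 = b ^ 2 + χ ^ 2)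
    (u v y z : ℝ → ℝ)
    (hu : ContinuousOn u (Icc 0 T)) (hv : ContinuousOn v (Icc 0 T))
    (hy : ∀ t ∈ Icc 0 T, HasDerivWithinAt y (-(z t ^ 2) / 2 + z t * u t) (Icc 0 T) t)
    (hz : ∀ t ∈ Icc 0 T, HasDerivWithinAt z (b * z t + c * v t) (Icc 0 T) t)
    (hy0 : y 0 = 0) (hz0 : z 0 = 0) (hyT : y T = a) :
    p * a ≤ (1 / 2) * (∫ t in (0 : ℝ)..T, (u t ^ 2 + v t ^ 2)) ∧
    ((1 / 2) * (∫ t in (0 : ℝ)..T, (u t ^ 2 + v t ^ 2)) = p * a →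
      ∀ t ∈ Ioo 0 T, u t = p * z t ∧
        (b * z t + c * v t) * Real.sin (χ * t) = χ * Real.cos (χ * t) * z t) := by
  have hsin : ∀ t ∈ Ioc 0 T, 0 < Real.sin (χ * t) := by
    intro t ht
    apply Real.sin_pos_of_pos_of_lt_pi (mul_pos hχ ht.1)
    have := mul_le_mul_of_nonneg_left ht.2 hχ.le
    linarith
  have hfc : ContinuousOn (fun t => u t ^ 2 + v t ^ 2) (Icc 0 T) := (hu.pow 2).add (hv.pow 2)
  have hint : IntervalIntegrable (fun t => u t ^ 2 + v t ^ 2) volume 0 T := by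
    apply ContinuousOn.intervalIntegrable
    rwa [uIcc_of_le hT.le]
  have hyc : ContinuousOn y (Icc 0 T) := fun t ht => (hy t ht).continuousWithinAt
  have hzc : ContinuousOn z (Icc 0 T) := fun t ht => (hz t ht).continuousWithinAt
  set I : ℝ → ℝ := fun t => ∫ s in (0 : ℝ)..t, (u s ^ 2 + v s ^ 2) with hI
  have hIc : ContinuousOn I (Icc 0 T) := by
    have := intervalIntegral.continuousOn_primitive_interval'
      (μ := volume) (f := fun t => u t ^ 2 + v t ^ 2) (a := 0) (b₁ := 0) (b₂ := T) hint
      left_mem_uIcc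
    rwa [uIcc_of_le hT.le] at this
  set C : ℝ → ℝ := fun t => Real.cos (χ * t) / Real.sin (χ * t) * z t ^ 2 with hC
  have hCc : ContinuousOn C (Icc 0 T) := by
    intro t ht
    rcases ht.1.eq_or_lt with h0 | h0
    · subst h0
      exact ss_tendsto χ T _ hT hχ z hz0 (hz 0 ht)
    · have hs := (hsin t ⟨h0, ht.2⟩).ne'
      have h1 : ContinuousAt (fun t => Real.cos (χ * t) / Real.sin (χ * t)) t := by
        exact (ss_dcos χ t).continuousAt.div (ss_dsin χ t).continuousAt hs
      exact h1.continuousWithinAt.mul ((hzc t ht).pow 2)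
  set Φ : ℝ → ℝ := fun t => I t - 2 * p * y t - (1 / c ^ 2) * (χ * C t - b * z t ^ 2) with hΦ
  have hΦc : ContinuousOn Φ (Icc 0 T) := by
    rw [hΦ]; fun_prop
  have hΦd : ∀ t ∈ Ioo 0 T, HasDerivAt Φ ((u t - p * z t) ^ 2 + (1 / c ^ 2) *
      ((b * z t + c * v t) - χ * Real.cos (χ * t) / Real.sin (χ * t) * z t) ^ 2) t := by
    intro t ht
    have htI : t ∈ Icc 0 T := ⟨ht.1.le, ht.2.le⟩
    have hn : Icc 0 T ∈ 𝓝 t := Icc_mem_nhds ht.1 ht.2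
    have hs := (hsin t ⟨ht.1, ht.2.le⟩).ne'
    have dy := (hy t htI).hasDerivAt hn
    have dz := (hz t htI).hasDerivAt hn
    have dI : HasDerivAt I (u t ^ 2 + v t ^ 2) t := by
      apply intervalIntegral.integral_hasDerivAt_right
      · apply hint.mono_set
        rw [uIcc_of_le ht.1.le, uIcc_of_le hT.le]
        exact Icc_subset_Icc_right ht.2.le
      · exact (hfc.mono Ioo_subset_Icc_self).stronglyMeasurableAtFilter isOpen_Ioo t ht
      · exact (hfc t htI).continuousAt hn
    have d1 : HasDerivAt (fun t => Real.cos (χ * t)) (-Real.sin (χ * t) * (χ * 1)) t :=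
      ((hasDerivAt_id t).const_mul χ).cos
    have d2 : HasDerivAt (fun t => Real.sin (χ * t)) (Real.cos (χ * t) * (χ * 1)) t :=
      ((hasDerivAt_id t).const_mul χ).sin
    have dC := (d1.div d2 hs).mul (dz.pow 2)
    have := (dI.sub (dy.const_mul (2 * p))).sub
      (((dC.const_mul χ).sub ((dz.pow 2).const_mul b)).const_mul (1 / c ^ 2))
    refine this.congr_deriv ?_
    have hcs := Real.sin_sq_add_cos_sq (χ * t)
    simp only [Pi.div_apply, Pi.pow_apply]
    generalize Real.sin (χ * t) = s at *
    generalize Real.cos (χ * t) = k at *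
    have hk : k ^ 2 = 1 - s ^ 2 := by linarith
    have hpp : p ^ 2 = p + (b ^ 2 + χ ^ 2) / c ^ 2 := by
      field_simp
      linarith
    have hc' := hc.ne'
    have e1 : (-s * (χ * 1) * s - k * (k * (χ * 1))) / s ^ 2 = - χ / s ^ 2 := by
      congr 1
      linear_combination (-χ) * hk
    have e2 : (k / s) ^ 2 = 1 / s ^ 2 - 1 := by
      field_simp; linarith
    rw [e1]
    have e3 : χ * k / s = χ * (k / s) := by ring
    have e4 : - χ / s ^ 2 = - χ * ((k / s) ^ 2 + 1) := by rw [e2]; ring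
    rw [e3, e4]
    generalize k / s = q
    have e5 : (u t - p * z t) ^ 2 = u t ^ 2 - 2 * p * u t * z t +
      (p + (b ^ 2 + χ ^ 2) / c ^ 2) * z t ^ 2 := by rw [← hpp]; ring
    rw [e5]
    field_simp
    push_cast
    ring
  have hmono : MonotoneOn Φ (Icc 0 T) := by
    apply monotoneOn_of_deriv_nonneg (convex_Icc 0 T) hΦc
    · rw [interior_Icc]
      exact fun t ht => (hΦd t ht).differentiableAt.differentiableWithinAt
    · rw [interior_Icc]
      intro t ht
      rw [(hΦd t ht).deriv]
      positivity
  have h0 : Φ 0 = 0 := by simp [hΦ, hI, hC, hy0, hz0]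
  have hsT := (hsin T ⟨hT, le_rfl⟩).ne'
  have hTv : Φ T = (∫ t in (0 : ℝ)..T, (u t ^ 2 + v t ^ 2)) - 2 * p * a := by
    have : χ * C T - b * z T ^ 2 = 0 := by
      simp only [hC]
      have : χ * (Real.cos (χ * T) / Real.sin (χ * T) * z T ^ 2) =
        (χ * Real.cos (χ * T)) / Real.sin (χ * T) * z T ^ 2 := by ring
      rw [this, hroot, mul_div_assoc, div_self hsT]; ring
    simp only [hΦ, this, hyT, hI]; ring
  have hm := hmono (left_mem_Icc.2 hT.le) (right_mem_Icc.2 hT.le) hT.le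
  refine ⟨by linarith, fun hE t ht => ?_⟩
  have hconst : ∀ s ∈ Icc 0 T, Φ s = 0 := by
    intro s hs
    have h1 := hmono (left_mem_Icc.2 hT.le) hs hs.1
    have h2 := hmono hs (right_mem_Icc.2 hT.le) hs.2
    linarith
  have hd0 : HasDerivAt Φ 0 t := by
    refine (hasDerivAt_const t (0:ℝ)).congr_of_eventuallyEq ?_
    filter_upwards [Icc_mem_nhds ht.1 ht.2] with s hs using hconst s hs
  have hsum := (hΦd t ht).unique hd0
  have hA : 0 ≤ (u t - p * z t) ^ 2 := sq_nonneg _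
  have hcp : 0 < 1 / c ^ 2 := by positivity
  have hB := mul_nonneg hcp.le
    (sq_nonneg ((b * z t + c * v t) - χ * Real.cos (χ * t) / Real.sin (χ * t) * z t))
  have hA0 : (u t - p * z t) ^ 2 = 0 := by linarith
  have hB0 : (1 / c ^ 2) *
      ((b * z t + c * v t) - χ * Real.cos (χ * t) / Real.sin (χ * t) * z t) ^ 2 = 0 := by linarith
  have hs := (hsin t ⟨ht.1, ht.2.le⟩).ne'
  have hA1 := pow_eq_zero_iff (two_ne_zero) |>.1 hA0
  have hB1 := pow_eq_zero_iff (two_ne_zero) |>.1 ((mul_eq_zero.1 hB0).resolve_left hcp.ne')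
  refine ⟨by linarith, ?_⟩
  have : b * z t + c * v t = χ * Real.cos (χ * t) / Real.sin (χ * t) * z t := by linarith
  rw [this]
  field_simp

/-- antiderivative of sin² -/
lemma ss_dS (χ t : ℝ) (hχ : 0 < χ) :
    HasDerivAt (fun t => t / 2 - Real.sin (χ * t) * Real.cos (χ * t) / (2 * χ))
      (Real.sin (χ * t) ^ 2) t := by
  have := ((hasDerivAt_id t).div_const 2).sub
    (((ss_dsin χ t).mul (ss_dcos χ t)).div_const (2 * χ))
  refine this.congr_deriv ?_
  have hcs := Real.sin_sq_add_cos_sq (χ * t)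
  field_simp
  linear_combination (-1) * hcs

open Set Filter Topology in
lemma ss_unique (T b c p χ a : ℝ) (hT : 0 < T) (hc : 0 < c) (hχ : 0 < χ) (hχT : χ * T < Real.pi)
    (hroot : χ * Real.cos (χ * T) = b * Real.sin (χ * T))
    (hp : (p ^ 2 - p) * c ^ 2 = b ^ 2 + χ ^ 2)
    (u v y z : ℝ → ℝ)
    (hu : ContinuousOn u (Icc 0 T)) (hv : ContinuousOn v (Icc 0 T))
    (hy : ∀ t ∈ Icc 0 T, HasDerivWithinAt y (-(z t ^ 2) / 2 + z t * u t) (Icc 0 T) t)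
    (hz : ∀ t ∈ Icc 0 T, HasDerivWithinAt z (b * z t + c * v t) (Icc 0 T) t)
    (hy0 : y 0 = 0) (hz0 : z 0 = 0) (hyT : y T = a)
    (hE : (1 / 2) * (∫ t in (0 : ℝ)..T, (u t ^ 2 + v t ^ 2)) = p * a) :
    ∃ K : ℝ, (∀ t ∈ Icc 0 T, u t = p * (K * Real.sin (χ * t)) ∧
        b * (K * Real.sin (χ * t)) + c * v t = K * (Real.cos (χ * t) * χ)) ∧
      a = (p - 1 / 2) * K ^ 2 * (T / 2 - Real.sin (χ * T) * Real.cos (χ * T) / (2 * χ)) := by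
  have hsin : ∀ t ∈ Ioc 0 T, 0 < Real.sin (χ * t) := by
    intro t ht
    apply Real.sin_pos_of_pos_of_lt_pi (mul_pos hχ ht.1)
    have := mul_le_mul_of_nonneg_left ht.2 hχ.le
    linarith
  have hopt := (ss_core T b c p χ a hT hc hχ hχT hroot hp u v y z hu hv hy hz hy0 hz0 hyT).2 hE
  have hzc : ContinuousOn z (Icc 0 T) := fun t ht => (hz t ht).continuousWithinAt
  have hext : ∀ f g : ℝ → ℝ, ContinuousOn f (Icc 0 T) → ContinuousOn g (Icc 0 T) →
      EqOn f g (Ioo 0 T) → EqOn f g (Icc 0 T) := by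
    intro f g hf hg h
    exact h.of_subset_closure hf hg Ioo_subset_Icc_self (by rw [closure_Ioo hT.ne])
  have hd : ∀ t ∈ Ioo 0 T, HasDerivAt (fun t => z t / Real.sin (χ * t)) 0 t := by
    intro t ht
    have dz := (hz t ⟨ht.1.le, ht.2.le⟩).hasDerivAt (Icc_mem_nhds ht.1 ht.2)
    have hs := (hsin t ⟨ht.1, ht.2.le⟩).ne'
    refine (dz.div (ss_dsin χ t) hs).congr_deriv ?_
    rw [(hopt t ht).2]
    ring
  obtain ⟨K, hK⟩ : ∃ K, ∀ t ∈ Ioo 0 T, z t / Real.sin (χ * t) = K := by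
    refine ⟨z (T / 2) / Real.sin (χ * (T / 2)), fun t ht => ?_⟩
    exact isOpen_Ioo.is_const_of_deriv_eq_zero isPreconnected_Ioo
      (fun s hs => (hd s hs).differentiableAt.differentiableWithinAt)
      (fun s hs => (hd s hs).deriv) ht ⟨by linarith, by linarith⟩
  have hzK : EqOn z (fun t => K * Real.sin (χ * t)) (Icc 0 T) := by
    apply hext _ _ hzc (by fun_prop)
    intro t ht
    have hs := (hsin t ⟨ht.1, ht.2.le⟩).ne'
    have := hK t ht
    simp only
    rw [← this]; field_simp
  have huz : EqOn u (fun t => p * z t) (Icc 0 T) := by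
    apply hext _ _ hu (by fun_prop)
    intro t ht
    exact (hopt t ht).1
  refine ⟨K, fun t ht => ⟨?_, ?_⟩, ?_⟩
  · rw [huz ht]; simp only [hzK ht]
  · have h1 := hz t ht
    have h2 : HasDerivWithinAt z (K * (Real.cos (χ * t) * χ)) (Icc 0 T) t :=
      (((ss_dsin χ t).const_mul K).hasDerivWithinAt).congr hzK (hzK ht)
    have := (uniqueDiffOn_Icc hT t ht).eq_deriv _ h1 h2
    rw [hzK ht] at this
    exact this
  · set S : ℝ → ℝ := fun t => t / 2 - Real.sin (χ * t) * Real.cos (χ * t) / (2 * χ) with hS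
    have hdW : ∀ t ∈ Icc 0 T,
        HasDerivWithinAt (fun t => y t - (p - 1 / 2) * K ^ 2 * S t) 0 (Icc 0 T) t := by
      intro t ht
      refine ((hy t ht).sub
        (((ss_dS χ t hχ).hasDerivWithinAt).const_mul ((p - 1 / 2) * K ^ 2))).congr_deriv ?_
      rw [huz ht]
      simp only [hzK ht]
      ring
    have hcon := constant_of_has_deriv_right_zero (a := 0) (b := T)
      (fun t ht => (hdW t ht).continuousWithinAt)
      (fun t ht => ((hdW t ⟨ht.1, ht.2.le⟩).mono_of_mem_nhdsWithin
        (Icc_mem_nhdsGE_of_mem ht))) T (right_mem_Icc.2 hT.le)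
    have hS0 : S 0 = 0 := by simp [hS]
    simp only [hS0, hy0, hyT] at hcon
    have : a = (p - 1 / 2) * K ^ 2 * S T := by linarith
    simpa [hS] using this

open Set Filter Topology MeasureTheory in
lemma ss_exists (T b c p χ a K : ℝ) (hc : 0 < c) (hχ : 0 < χ)
    (hroot : χ * Real.cos (χ * T) = b * Real.sin (χ * T))
    (hp : (p ^ 2 - p) * c ^ 2 = b ^ 2 + χ ^ 2)
    (ha : a = (p - 1 / 2) * K ^ 2 * (T / 2 - Real.sin (χ * T) * Real.cos (χ * T) / (2 * χ)))
    (u v : ℝ → ℝ)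
    (hu : ∀ t, u t = p * (K * Real.sin (χ * t)))
    (hv : ∀ t, v t = K / c * (χ * Real.cos (χ * t) - b * Real.sin (χ * t))) :
    ∃ h₁ h₂ y z : ℝ → ℝ,
        (∀ t ∈ Set.Icc (0 : ℝ) T, HasDerivWithinAt h₁ (u t) (Set.Icc (0 : ℝ) T) t) ∧
        (∀ t ∈ Set.Icc (0 : ℝ) T, HasDerivWithinAt h₂ (v t) (Set.Icc (0 : ℝ) T) t) ∧
        h₁ 0 = 0 ∧ h₂ 0 = 0 ∧
        (∀ t ∈ Set.Icc (0 : ℝ) T,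
          HasDerivWithinAt y (-(z t ^ 2) / 2 + z t * u t) (Set.Icc (0 : ℝ) T) t) ∧
        (∀ t ∈ Set.Icc (0 : ℝ) T,
          HasDerivWithinAt z (b * z t + c * v t) (Set.Icc (0 : ℝ) T) t) ∧
        y 0 = 0 ∧ z 0 = 0 ∧ y T = a ∧
        (1 / 2) * (∫ t in (0 : ℝ)..T, (u t ^ 2 + v t ^ 2)) = p * a := by
  obtain rfl : u = fun t => p * (K * Real.sin (χ * t)) := funext hu
  obtain rfl : v = fun t => K / c * (χ * Real.cos (χ * t) - b * Real.sin (χ * t)) := funext hv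
  refine ⟨fun t => p * K / χ * (1 - Real.cos (χ * t)),
    fun t => K / c * (Real.sin (χ * t) - b / χ * (1 - Real.cos (χ * t))),
    fun t => (p - 1 / 2) * K ^ 2 * (t / 2 - Real.sin (χ * t) * Real.cos (χ * t) / (2 * χ)),
    fun t => K * Real.sin (χ * t), ?_, ?_, by simp, by simp, ?_, ?_, by simp, by simp, ha.symm, ?_⟩
  · intro t _
    refine (((ss_dcos χ t).const_sub 1).const_mul (p * K / χ)).hasDerivWithinAt.congr_deriv ?_
    field_simp
  · intro t _
    refine (((ss_dsin χ t).sub (((ss_dcos χ t).const_sub 1).const_mul (b / χ))).const_mul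
      (K / c)).hasDerivWithinAt.congr_deriv ?_
    field_simp
  · intro t _
    refine ((ss_dS χ t hχ).const_mul ((p - 1 / 2) * K ^ 2)).hasDerivWithinAt.congr_deriv ?_
    ring
  · intro t _
    refine ((ss_dsin χ t).const_mul K).hasDerivWithinAt.congr_deriv ?_
    field_simp
    ring
  · have hint := intervalIntegral.integral_eq_sub_of_hasDerivAt (a := 0) (b := T)
      (f := fun t => 2 * p * ((p - 1 / 2) * K ^ 2 *
          (t / 2 - Real.sin (χ * t) * Real.cos (χ * t) / (2 * χ))) +
        K ^ 2 / c ^ 2 * (χ * (Real.sin (χ * t) * Real.cos (χ * t)) - b * Real.sin (χ * t) ^ 2))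
      (f' := fun t => (p * (K * Real.sin (χ * t))) ^ 2 +
        (K / c * (χ * Real.cos (χ * t) - b * Real.sin (χ * t))) ^ 2) ?_ ?_
    · rw [hint, ← ha]
      have : χ * (Real.sin (χ * T) * Real.cos (χ * T)) - b * Real.sin (χ * T) ^ 2 = 0 := by
        linear_combination Real.sin (χ * T) * hroot
      rw [this]
      simp
      ring
    · intro t _
      refine ((((ss_dS χ t hχ).const_mul ((p - 1 / 2) * K ^ 2)).const_mul (2 * p)).add
        (((((ss_dsin χ t).mul (ss_dcos χ t)).const_mul χ).sub
          (((ss_dsin χ t).pow 2).const_mul b)).const_mul (K ^ 2 / c ^ 2))).congr_deriv ?_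
      field_simp
      push_cast
      have hcs := Real.sin_sq_add_cos_sq (χ * t)
      linear_combination (K ^ 2 * Real.sin (χ * t) ^ 2) * hp
    · apply Continuous.intervalIntegrable
      fun_prop



/-- In the uncorrelated Stein–Stein control problem, the minimal energy `p₁⁺·a` is
attained exactly at the two controls `h₀⁺`, `h₀⁻` with the explicitly given
derivatives (differing only by a sign). -/
theorem stein_stein_uncorrelated_minimizers
    (T b c a : ℝ) (hT : 0 < T) (hb : b ≤ 0) (hc : 0 < c) (ha : 0 < a)
    (r₁ : ℝ) (hr₁ : 0 < r₁)
    (hroot : r₁ * Real.cos r₁ = b * T * Real.sin r₁)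
    (hmin : ∀ r : ℝ, 0 < r → r * Real.cos r = b * T * Real.sin r → r₁ ≤ r)
    (p₁ χ q₀ : ℝ)
    (hp₁ : p₁ = (1 / 2) * (1 + Real.sqrt (1 + 4 * b ^ 2 / c ^ 2 + 4 * r₁ ^ 2 / (c ^ 2 * T ^ 2))))
    (hχ : χ = r₁ / T)
    (hq₀ : q₀ = (2 / c ^ 2) *
      Real.sqrt (2 * r₁ ^ 3 * a / ((2 * p₁ - 1) * T ^ 3 * (2 * r₁ - Real.sin (2 * r₁))))) :
    -- the value `p₁·a` is the least energy, attained
    (IsLeast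
      {E : ℝ | ∃ h₁ h₂ h₁d h₂d y z : ℝ → ℝ,
        ContinuousOn h₁d (Set.Icc (0 : ℝ) T) ∧ ContinuousOn h₂d (Set.Icc (0 : ℝ) T) ∧
        (∀ t ∈ Set.Icc (0 : ℝ) T, HasDerivWithinAt h₁ (h₁d t) (Set.Icc (0 : ℝ) T) t) ∧
        (∀ t ∈ Set.Icc (0 : ℝ) T, HasDerivWithinAt h₂ (h₂d t) (Set.Icc (0 : ℝ) T) t) ∧
        h₁ 0 = 0 ∧ h₂ 0 = 0 ∧
        (∀ t ∈ Set.Icc (0 : ℝ) T,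
          HasDerivWithinAt y (-(z t ^ 2) / 2 + z t * h₁d t) (Set.Icc (0 : ℝ) T) t) ∧
        (∀ t ∈ Set.Icc (0 : ℝ) T,
          HasDerivWithinAt z (b * z t + c * h₂d t) (Set.Icc (0 : ℝ) T) t) ∧
        y 0 = 0 ∧ z 0 = 0 ∧ y T = a ∧
        E = (1 / 2) * ∫ t in (0 : ℝ)..T, (h₁d t ^ 2 + h₂d t ^ 2)}
      (p₁ * a)) ∧
    -- the two explicit controls are admissible
    (∀ ε : ℝ, ε = 1 ∨ ε = -1 →
      ∃ h₁ h₂ y z : ℝ → ℝ,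
        (∀ t ∈ Set.Icc (0 : ℝ) T,
          HasDerivWithinAt h₁ (ε * (p₁ * (q₀ * c ^ 2 / χ) * Real.sin (χ * t)))
            (Set.Icc (0 : ℝ) T) t) ∧
        (∀ t ∈ Set.Icc (0 : ℝ) T,
          HasDerivWithinAt h₂
            (ε * (c * q₀ * (Real.cos (χ * t) - b / χ * Real.sin (χ * t))))
            (Set.Icc (0 : ℝ) T) t) ∧
        h₁ 0 = 0 ∧ h₂ 0 = 0 ∧
        (∀ t ∈ Set.Icc (0 : ℝ) T,
          HasDerivWithinAt y
            (-(z t ^ 2) / 2 + z t * (ε * (p₁ * (q₀ * c ^ 2 / χ) * Real.sin (χ * t))))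
            (Set.Icc (0 : ℝ) T) t) ∧
        (∀ t ∈ Set.Icc (0 : ℝ) T,
          HasDerivWithinAt z
            (b * z t + c * (ε * (c * q₀ * (Real.cos (χ * t) - b / χ * Real.sin (χ * t)))))
            (Set.Icc (0 : ℝ) T) t) ∧
        y 0 = 0 ∧ z 0 = 0 ∧ y T = a ∧
        (1 / 2) * (∫ t in (0 : ℝ)..T,
            ((ε * (p₁ * (q₀ * c ^ 2 / χ) * Real.sin (χ * t))) ^ 2
              + (ε * (c * q₀ * (Real.cos (χ * t) - b / χ * Real.sin (χ * t)))) ^ 2))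
          = p₁ * a) ∧
    -- exactness: any admissible control attaining the value `p₁·a` is one of the two
    (∀ h₁ h₂ h₁d h₂d y z : ℝ → ℝ,
      ContinuousOn h₁d (Set.Icc (0 : ℝ) T) → ContinuousOn h₂d (Set.Icc (0 : ℝ) T) →
      (∀ t ∈ Set.Icc (0 : ℝ) T, HasDerivWithinAt h₁ (h₁d t) (Set.Icc (0 : ℝ) T) t) →
      (∀ t ∈ Set.Icc (0 : ℝ) T, HasDerivWithinAt h₂ (h₂d t) (Set.Icc (0 : ℝ) T) t) →
      h₁ 0 = 0 → h₂ 0 = 0 →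
      (∀ t ∈ Set.Icc (0 : ℝ) T,
        HasDerivWithinAt y (-(z t ^ 2) / 2 + z t * h₁d t) (Set.Icc (0 : ℝ) T) t) →
      (∀ t ∈ Set.Icc (0 : ℝ) T,
        HasDerivWithinAt z (b * z t + c * h₂d t) (Set.Icc (0 : ℝ) T) t) →
      y 0 = 0 → z 0 = 0 → y T = a →
      (1 / 2) * (∫ t in (0 : ℝ)..T, (h₁d t ^ 2 + h₂d t ^ 2)) = p₁ * a →
      ((∀ t ∈ Set.Icc (0 : ℝ) T,
          h₁d t = p₁ * (q₀ * c ^ 2 / χ) * Real.sin (χ * t) ∧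
          h₂d t = c * q₀ * (Real.cos (χ * t) - b / χ * Real.sin (χ * t))) ∨
        (∀ t ∈ Set.Icc (0 : ℝ) T,
          h₁d t = -(p₁ * (q₀ * c ^ 2 / χ) * Real.sin (χ * t)) ∧
          h₂d t = -(c * q₀ * (Real.cos (χ * t) - b / χ * Real.sin (χ * t)))))) := by
  have hlt := ss_r_lt_pi T b r₁ hT hb hmin
  have hχ0 : 0 < χ := by rw [hχ]; positivity
  have hr : r₁ = χ * T := by rw [hχ]; field_simp
  have hroot' : χ * Real.cos (χ * T) = b * Real.sin (χ * T) := by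
    rw [hr] at hroot
    have : T * (χ * Real.cos (χ * T)) = T * (b * Real.sin (χ * T)) := by linarith
    exact mul_left_cancel₀ hT.ne' this
  have hs0 : 0 ≤ 1 + 4 * b ^ 2 / c ^ 2 + 4 * r₁ ^ 2 / (c ^ 2 * T ^ 2) := by positivity
  have hsq := Real.sq_sqrt hs0
  have hspos : 0 < Real.sqrt (1 + 4 * b ^ 2 / c ^ 2 + 4 * r₁ ^ 2 / (c ^ 2 * T ^ 2)) :=
    Real.sqrt_pos.2 (by positivity)
  have h2p : 2 * p₁ - 1 = Real.sqrt (1 + 4 * b ^ 2 / c ^ 2 + 4 * r₁ ^ 2 / (c ^ 2 * T ^ 2)) := by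
    rw [hp₁]; ring
  rw [← h2p] at hsq hspos
  have hp : (p₁ ^ 2 - p₁) * c ^ 2 = b ^ 2 + χ ^ 2 := by
    rw [hχ]
    have : p₁ ^ 2 - p₁ = b ^ 2 / c ^ 2 + r₁ ^ 2 / (c ^ 2 * T ^ 2) := by
      linear_combination (1 / 4) * hsq
    rw [this]; field_simp
  have hχT : χ * T < Real.pi := by rwa [← hr]
  have hsin2 : 0 < 2 * r₁ - Real.sin (2 * r₁) := by
    have := Real.sin_lt (show 0 < 2 * r₁ by positivity)
    linarith
  have hSS : T / 2 - Real.sin (χ * T) * Real.cos (χ * T) / (2 * χ) =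
      (2 * r₁ - Real.sin (2 * r₁)) / (4 * χ) := by
    rw [Real.sin_two_mul, ← hr, hr]; field_simp; ring
  have hK2 : (q₀ * c ^ 2 / χ) ^ 2 =
      8 * χ * a / ((2 * p₁ - 1) * (2 * r₁ - Real.sin (2 * r₁))) := by
    have hs1 := Real.sq_sqrt (show 0 ≤ 2 * r₁ ^ 3 * a /
      ((2 * p₁ - 1) * T ^ 3 * (2 * r₁ - Real.sin (2 * r₁))) by positivity)
    have : (q₀ * c ^ 2 / χ) ^ 2 = 4 / χ ^ 2 * Real.sqrt (2 * r₁ ^ 3 * a /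
      ((2 * p₁ - 1) * T ^ 3 * (2 * r₁ - Real.sin (2 * r₁)))) ^ 2 := by
      rw [hq₀]; field_simp; ring
    rw [this, hs1]
    generalize 2 * r₁ - Real.sin (2 * r₁) = w at *
    rw [hr]
    field_simp
    ring
  have haK : ∀ ε : ℝ, ε = 1 ∨ ε = -1 → a = (p₁ - 1 / 2) * (ε * (q₀ * c ^ 2 / χ)) ^ 2 *
      (T / 2 - Real.sin (χ * T) * Real.cos (χ * T) / (2 * χ)) := by
    intro ε hε
    have hε2 : ε ^ 2 = 1 := by rcases hε with h | h <;> rw [h] <;> norm_num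
    rw [mul_pow, hε2, hK2, hSS]
    generalize 2 * r₁ - Real.sin (2 * r₁) = w at *
    have : p₁ - 1 / 2 = (2 * p₁ - 1) / 2 := by ring
    rw [this]
    field_simp
    norm_num
  have hex := fun (ε : ℝ) (hε : ε = 1 ∨ ε = -1) =>
    ss_exists T b c p₁ χ a (ε * (q₀ * c ^ 2 / χ)) hc hχ0 hroot' hp (haK ε hε)
      (fun t => ε * (p₁ * (q₀ * c ^ 2 / χ) * Real.sin (χ * t)))
      (fun t => ε * (c * q₀ * (Real.cos (χ * t) - b / χ * Real.sin (χ * t))))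
      (fun t => by ring) (fun t => by field_simp)
  refine ⟨⟨?_, ?_⟩, hex, ?_⟩
  · obtain ⟨h₁, h₂, y, z, A, B, C, D, E, F, G, H, I, J⟩ := hex 1 (Or.inl rfl)
    exact ⟨h₁, h₂, _, _, y, z, by fun_prop, by fun_prop, A, B, C, D, E, F, G, H, I, J.symm⟩
  · rintro E ⟨h₁, h₂, u, v, y, z, hu, hv, -, -, -, -, hy, hz, hy0, hz0, hyT, rfl⟩
    exact (ss_core T b c p₁ χ a hT hc hχ0 hχT hroot' hp u v y z hu hv hy hz hy0 hz0 hyT).1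
  · intro h₁ h₂ u v y z hu hv _ _ _ _ hy hz hy0 hz0 hyT hE
    obtain ⟨K, hK, haK'⟩ :=
      ss_unique T b c p₁ χ a hT hc hχ0 hχT hroot' hp u v y z hu hv hy hz hy0 hz0 hyT hE
    have h1 := haK 1 (Or.inl rfl)
    have hpos : 0 < (p₁ - 1 / 2) *
        (T / 2 - Real.sin (χ * T) * Real.cos (χ * T) / (2 * χ)) := by
      rw [hSS]
      have : 0 < p₁ - 1 / 2 := by linarith
      positivity
    have hKK : K ^ 2 = (q₀ * c ^ 2 / χ) ^ 2 := by
      apply mul_left_cancel₀ hpos.ne'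
      linear_combination h1 - haK'
    have hvt : ∀ t ∈ Set.Icc (0 : ℝ) T,
        v t = K / c * (χ * Real.cos (χ * t) - b * Real.sin (χ * t)) := by
      intro t ht
      have := (hK t ht).2
      field_simp
      linarith
    rcases sq_eq_sq_iff_eq_or_eq_neg.1 hKK with h | h
    · left
      intro t ht
      refine ⟨by rw [(hK t ht).1, h]; ring, ?_⟩
      rw [hvt t ht, h]; field_simp
    · right
      intro t ht
      refine ⟨by rw [(hK t ht).1, h]; ring, ?_⟩
      rw [hvt t ht, h]; field_simp
end
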